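/- Let A₀(x) = f(|x|) with f : (0,∞) → ℝ smooth, let A₁ = A₂ = A₃ = 0, and let m ∈ ℝ. Define the Dirac Hamiltonian ℬψ = (α·(−i∇))ψ + A₀ψ + mβψ for smooth ψ : ℝ³∖{0} → ℂ⁴, where (α·(−i∇))ψ = Σ_j α_j(−i∂_jψ). Then ℬ commutes with Dirac's operator K: ℬ(Kψ) = K(ℬψ) for every smooth ψ : ℝ³∖{0} → ℂ⁴. -/

import Mathlib

noncomputable section

open Matrix

/-- Physical space ℝ³. -/
abbrev E3 := EuclideanSpace ℝ (Fin 3)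

/-- The Pauli matrices σ₁, σ₂, σ₃ (indexed by `Fin 3`, with `pauli 0 = σ₁`, etc.). -/
def pauli : Fin 3 → Matrix (Fin 2) (Fin 2) ℂ
  | 0 => !![0, 1; 1, 0]
  | 1 => !![0, -Complex.I; Complex.I, 0]
  | 2 => !![1, 0; 0, -1]

/-- The 4×4 block matrix `[[A, B], [C, D]]` built from 2×2 blocks. -/
def qblock (A B C D : Matrix (Fin 2) (Fin 2) ℂ) : Matrix (Fin 4) (Fin 4) ℂ :=
  Matrix.reindex finSumFinEquiv finSumFinEquiv (Matrix.fromBlocks A B C D)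

/-- The Dirac matrix `β = γ⁰ = [[I₂,0],[0,−I₂]]`. -/
def betaM : Matrix (Fin 4) (Fin 4) ℂ := qblock 1 0 0 (-1)

/-- The spin matrices `Σⱼ = [[σⱼ,0],[0,σⱼ]]` for j = 1,2,3. -/
def SigM (j : Fin 3) : Matrix (Fin 4) (Fin 4) ℂ := qblock (pauli j) 0 0 (pauli j)

/-- The partial derivative `∂ⱼψ` of a ℂ⁴-valued function on ℝ³. -/
def pd (j : Fin 3) (ψ : E3 → Fin 4 → ℂ) : E3 → Fin 4 → ℂ :=
  fun x => fderiv ℝ ψ x (EuclideanSpace.single j 1)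

/-- The orbital angular momentum operator `Lⱼψ = −i (x × ∇ψ)ⱼ` (cyclic indices in `Fin 3`). -/
def Lop (j : Fin 3) (ψ : E3 → Fin 4 → ℂ) : E3 → Fin 4 → ℂ :=
  fun x => (-Complex.I) • (x (j + 1) • pd (j + 2) ψ x - x (j + 2) • pd (j + 1) ψ x)

/-- The operator `L²ψ = Σⱼ Lⱼ(Lⱼψ)`. -/
def L2op (ψ : E3 → Fin 4 → ℂ) : E3 → Fin 4 → ℂ :=
  fun x => ∑ j, Lop j (Lop j ψ) x

/-- The operator `(Σ·L)ψ = Σⱼ Σⱼ(Lⱼψ)`. -/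
def SigL (ψ : E3 → Fin 4 → ℂ) : E3 → Fin 4 → ℂ :=
  fun x => ∑ j, (SigM j).mulVec (Lop j ψ x)

/-- Dirac's operator `Kψ = β(ψ + (Σ·L)ψ)`. -/
def Kop (ψ : E3 → Fin 4 → ℂ) : E3 → Fin 4 → ℂ :=
  fun x => betaM.mulVec (ψ x + SigL ψ x)


/-- The Dirac matrices `αⱼ = [[0,σⱼ],[σⱼ,0]]` for j = 1,2,3. -/
def alphaM (j : Fin 3) : Matrix (Fin 4) (Fin 4) ℂ := qblock 0 (pauli j) (pauli j) 0

/-- The Dirac Hamiltonian `ℬψ = (α·(−i∇))ψ + A₀ψ + mβψ` with radial electric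
potential `A₀(x) = f(|x|)` and mass `m`. -/
def Bop (f : ℝ → ℝ) (m : ℝ) (ψ : E3 → Fin 4 → ℂ) : E3 → Fin 4 → ℂ :=
  fun x => (∑ j, (alphaM j).mulVec ((-Complex.I) • pd j ψ x))
    + ((f ‖x‖ : ℝ) : ℂ) • ψ x + (m : ℂ) • betaM.mulVec (ψ x)

/-! With `αⱼ = γ₅Σⱼ` the kinetic term is `-iγ₅(Σ·∇)`. The Pauli identity, together with
`L·∇ = ∇·L = 0` and `L × ∇ + ∇ × L = 2i∇`, gives `(Σ·L)(Σ·∇) + (Σ·∇)(Σ·L) = -2Σ·∇`, that is,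
`1 + Σ·L` anticommutes with `Σ·∇`. Hence so does `K`, because `β` commutes with every `Σⱼ`. As `K`
also anticommutes with `γ₅`, it commutes with the kinetic term. It commutes with a radial potential
because `Lₖ` is the derivative along `eₖ × x ⟂ x`, a direction in which a radial function is
stationary. -/

theorem hasFDerivAt_linearMap_comp {𝕜 E V W : Type*} [NontriviallyNormedField 𝕜] [CompleteSpace 𝕜]
    [NormedAddCommGroup E] [NormedSpace 𝕜 E]
    [NormedAddCommGroup V] [NormedSpace 𝕜 V] [FiniteDimensional 𝕜 V]
    [NormedAddCommGroup W] [NormedSpace 𝕜 W]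
    (T : V →ₗ[𝕜] W) {φ : E → V} {φ' : E →L[𝕜] V} {x : E} (hφ : HasFDerivAt φ φ' x) :
    HasFDerivAt (fun y => T (φ y)) (T.toContinuousLinearMap.comp φ') x :=
  T.toContinuousLinearMap.hasFDerivAt.comp x hφ

section MulVec

variable {E m n : Type*} [NormedAddCommGroup E] [NormedSpace ℝ E] [Finite m] [Fintype n]
  {φ : E → n → ℂ} {x : E}

theorem hasFDerivAt_mulVec (M : Matrix m n ℂ) {φ' : E →L[ℝ] n → ℂ} (hφ : HasFDerivAt φ φ' x) :
    HasFDerivAt (fun y => M *ᵥ φ y)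
      ((M.mulVecLin.restrictScalars ℝ).toContinuousLinearMap.comp φ') x := by
  have := Fintype.ofFinite m
  exact hasFDerivAt_linearMap_comp (M.mulVecLin.restrictScalars ℝ) hφ

theorem differentiableAt_mulVec (M : Matrix m n ℂ) (hφ : DifferentiableAt ℝ φ x) :
    DifferentiableAt ℝ (fun y => M *ᵥ φ y) x :=
  (hasFDerivAt_mulVec M hφ.hasFDerivAt).differentiableAt

theorem fderiv_mulVec (M : Matrix m n ℂ) (hφ : DifferentiableAt ℝ φ x) (v : E) :
    fderiv ℝ (fun y => M *ᵥ φ y) x v = M *ᵥ fderiv ℝ φ x v :=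
  DFunLike.congr_fun (hasFDerivAt_mulVec M hφ.hasFDerivAt).fderiv v

end MulVec

theorem differentiableAt_fderiv {𝕜 E F : Type*} [NontriviallyNormedField 𝕜]
    [NormedAddCommGroup E] [NormedSpace 𝕜 E] [NormedAddCommGroup F] [NormedSpace 𝕜 F]
    {φ : E → F} {x : E} (hφ : ContDiffAt 𝕜 2 φ x) : DifferentiableAt 𝕜 (fderiv 𝕜 φ) x :=
  (hφ.fderiv_right (m := 1) (by norm_num)).differentiableAt one_ne_zero

theorem fderiv_radial_apply_eq_zero {H F : Type*} [NormedAddCommGroup H] [InnerProductSpace ℝ H]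
    [NormedAddCommGroup F] [NormedSpace ℝ F] {f : ℝ → F} {x v : H} (hv : inner ℝ x v = 0) :
    fderiv ℝ (fun y => f ‖y‖) x v = 0 := by
  by_cases hf : DifferentiableAt ℝ (fun y : H => f ‖y‖) x
  · -- Since `v ⟂ x`, the function `t ↦ f ‖x + t • v‖` is even, so its derivative at `0` vanishes.
    have even : lineDeriv ℝ (fun y => f ‖y‖) x (-v) = lineDeriv ℝ (fun y => f ‖y‖) x v := by
      have norm_even (t : ℝ) : ‖x + t • -v‖ = ‖x + t • v‖ := by
        rw [smul_neg, ← sub_eq_add_neg]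
        exact norm_sub_eq_norm_add (by rw [inner_smul_left, real_inner_comm, hv, mul_zero])
      simp only [lineDeriv, norm_even]
    rw [lineDeriv_neg, hf.lineDeriv_eq_fderiv] at even
    have := IsAddTorsionFree.of_isTorsionFree ℝ F
    exact self_eq_neg.mp even.symm
  · simp [fderiv_zero_of_not_differentiableAt hf]

section Spinors

theorem qblock_mul (A B C D A' B' C' D' : Matrix (Fin 2) (Fin 2) ℂ) :
    qblock A B C D * qblock A' B' C' D' =
      qblock (A * A' + B * C') (A * B' + B * D') (C * A' + D * C') (C * B' + D * D') := by
  simp [qblock, submatrix_mul_equiv, fromBlocks_multiply]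

theorem smul_qblock (c : ℂ) (A B C D : Matrix (Fin 2) (Fin 2) ℂ) :
    c • qblock A B C D = qblock (c • A) (c • B) (c • C) (c • D) := by
  simp [qblock, ← fromBlocks_smul, submatrix_smul]

theorem neg_qblock (A B C D : Matrix (Fin 2) (Fin 2) ℂ) :
    -qblock A B C D = qblock (-A) (-B) (-C) (-D) := by
  simpa using smul_qblock (-1) A B C D

theorem qblock_one : qblock 1 0 0 1 = 1 := by
  simp [qblock]

theorem pauli_mul_self (j : Fin 3) : pauli j * pauli j = 1 := by
  fin_cases j <;> simp [pauli, one_fin_two]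

theorem pauli_mul_add_one (j : Fin 3) : pauli j * pauli (j + 1) = Complex.I • pauli (j + 2) := by
  fin_cases j <;> simp [pauli]

theorem pauli_add_one_mul (j : Fin 3) : pauli (j + 1) * pauli j = -(Complex.I • pauli (j + 2)) := by
  fin_cases j <;> simp [pauli]

theorem SigM_mul_self (j : Fin 3) : SigM j * SigM j = 1 := by
  simp [SigM, qblock_mul, pauli_mul_self, qblock_one]

theorem SigM_mul_add_one (j : Fin 3) : SigM j * SigM (j + 1) = Complex.I • SigM (j + 2) := by
  simp [SigM, qblock_mul, smul_qblock, pauli_mul_add_one]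

theorem SigM_add_one_mul (j : Fin 3) : SigM (j + 1) * SigM j = -(Complex.I • SigM (j + 2)) := by
  simp [SigM, qblock_mul, smul_qblock, neg_qblock, pauli_add_one_mul]

/-- The chirality matrix `γ₅ = [[0,I₂],[I₂,0]]`, through which `αⱼ = γ₅Σⱼ`. -/
def gamma5 : Matrix (Fin 4) (Fin 4) ℂ := qblock 0 1 1 0

theorem gamma5_mul_SigM (j : Fin 3) : gamma5 * SigM j = alphaM j := by
  simp [gamma5, SigM, alphaM, qblock_mul]

theorem SigM_commute_gamma5 (j : Fin 3) : Commute (SigM j) gamma5 := by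
  simp [commute_iff_eq, gamma5, SigM, qblock_mul]

theorem SigM_commute_betaM (j : Fin 3) : Commute (SigM j) betaM := by
  simp [commute_iff_eq, betaM, SigM, qblock_mul]

theorem betaM_mul_gamma5 : betaM * gamma5 = -(gamma5 * betaM) := by
  simp [betaM, gamma5, qblock_mul, neg_qblock]

/-- The contraction `Σ·w = Σⱼ Σⱼwⱼ` of the spin matrices with a triple `w` of spinors. -/
def spinDot : (Fin 3 → Fin 4 → ℂ) →ₗ[ℂ] Fin 4 → ℂ :=
  ∑ j, (SigM j).mulVecLin ∘ₗ LinearMap.proj j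

theorem spinDot_apply (w : Fin 3 → Fin 4 → ℂ) : spinDot w = ∑ j, SigM j *ᵥ w j := by
  simp [spinDot]

theorem spinDot_mulVec {M : Matrix (Fin 4) (Fin 4) ℂ} (hM : ∀ j, Commute (SigM j) M)
    (w : Fin 3 → Fin 4 → ℂ) : spinDot (fun j => M *ᵥ w j) = M *ᵥ spinDot w := by
  simp only [spinDot_apply, mulVec_sum, mulVec_mulVec, (hM _).eq]

-- The Pauli identity `(Σ·a)(Σ·b) = a·b + iΣ·(a × b)`, with `w j k` in place of `aⱼbₖ`.
theorem spinDot_spinDot (w : Fin 3 → Fin 3 → Fin 4 → ℂ) :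
    spinDot (fun j => spinDot (w j)) = ∑ j, w j j +
      Complex.I • spinDot (fun j => w (j + 1) (j + 2) - w (j + 2) (j + 1)) := by
  have h01 : SigM 0 * SigM 1 = Complex.I • SigM 2 := SigM_mul_add_one 0
  have h12 : SigM 1 * SigM 2 = Complex.I • SigM 0 := SigM_mul_add_one 1
  have h20 : SigM 2 * SigM 0 = Complex.I • SigM 1 := SigM_mul_add_one 2
  have h10 : SigM 1 * SigM 0 = -(Complex.I • SigM 2) := SigM_add_one_mul 0
  have h21 : SigM 2 * SigM 1 = -(Complex.I • SigM 0) := SigM_add_one_mul 1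
  have h02 : SigM 0 * SigM 2 = -(Complex.I • SigM 1) := SigM_add_one_mul 2
  simp only [spinDot_apply, Fin.sum_univ_three, Fin.isValue, zero_add, Fin.reduceAdd, mulVec_add,
    mulVec_sub, mulVec_mulVec, SigM_mul_self, h01, h12, h20, h10, h21, h02, neg_mulVec,
    smul_mulVec, one_mulVec]
  module

variable {E : Type*} [NormedAddCommGroup E] [NormedSpace ℝ E] {w : Fin 3 → E → Fin 4 → ℂ} {x : E}

theorem hasFDerivAt_spinDot {w' : Fin 3 → E →L[ℝ] Fin 4 → ℂ}
    (hw : ∀ k, HasFDerivAt (w k) (w' k) x) :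
    HasFDerivAt (fun y => spinDot fun k => w k y)
      ((spinDot.restrictScalars ℝ).toContinuousLinearMap.comp (ContinuousLinearMap.pi w')) x :=
  hasFDerivAt_linearMap_comp (spinDot.restrictScalars ℝ) (hasFDerivAt_pi.mpr hw)

theorem differentiableAt_spinDot (hw : ∀ k, DifferentiableAt ℝ (w k) x) :
    DifferentiableAt ℝ (fun y => spinDot fun k => w k y) x :=
  (hasFDerivAt_spinDot fun k => (hw k).hasFDerivAt).differentiableAt

theorem fderiv_spinDot (hw : ∀ k, DifferentiableAt ℝ (w k) x) (v : E) :
    fderiv ℝ (fun y => spinDot fun k => w k y) x v = spinDot fun k => fderiv ℝ (w k) x v :=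
  DFunLike.congr_fun (hasFDerivAt_spinDot fun k => (hw k).hasFDerivAt).fderiv v

end Spinors

section AngularMomentum

variable {φ χ : E3 → Fin 4 → ℂ} {x : E3}

/-- The infinitesimal rotation `x ↦ eₖ × x` about the `k`-th axis. -/
def rotationGen (k : Fin 3) : E3 →L[ℝ] E3 :=
  (EuclideanSpace.proj (k + 1)).smulRight (EuclideanSpace.single (k + 2) 1) -
    (EuclideanSpace.proj (k + 2)).smulRight (EuclideanSpace.single (k + 1) 1)

theorem rotationGen_apply (k : Fin 3) (x : E3) :
    rotationGen k x =
      x (k + 1) • EuclideanSpace.single (k + 2) 1 - x (k + 2) • EuclideanSpace.single (k + 1) 1 :=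
  rfl

theorem inner_rotationGen (k : Fin 3) (x : E3) : inner ℝ x (rotationGen k x) = 0 := by
  simp [rotationGen_apply, inner_sub_right, inner_smul_right, EuclideanSpace.inner_single_right,
    mul_comm]

theorem rotationGen_single_self (j : Fin 3) :
    rotationGen j (EuclideanSpace.single j 1) = 0 := by
  simp [rotationGen_apply]

theorem rotationGen_add_one_single_add_two (j : Fin 3) :
    rotationGen (j + 1) (EuclideanSpace.single (j + 2) 1) = EuclideanSpace.single j 1 := by
  fin_cases j <;> simp [rotationGen_apply]

theorem rotationGen_add_two_single_add_one (j : Fin 3) :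
    rotationGen (j + 2) (EuclideanSpace.single (j + 1) 1) = -EuclideanSpace.single j 1 := by
  fin_cases j <;> simp [rotationGen_apply]

theorem Lop_eq_fderiv (k : Fin 3) (φ : E3 → Fin 4 → ℂ) :
    Lop k φ = fun x => -Complex.I • fderiv ℝ φ x (rotationGen k x) := by
  ext1 x
  simp only [Lop, pd, rotationGen_apply, map_sub, map_smul]

theorem pd_apply (j : Fin 3) (φ : E3 → Fin 4 → ℂ) (x : E3) :
    pd j φ x = fderiv ℝ φ x (EuclideanSpace.single j 1) :=
  rfl

theorem Lop_add (k : Fin 3) (hφ : DifferentiableAt ℝ φ x) (hχ : DifferentiableAt ℝ χ x) :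
    Lop k (φ + χ) x = Lop k φ x + Lop k χ x := by
  simp only [Lop_eq_fderiv, fderiv_add hφ hχ, _root_.add_apply, smul_add]

theorem Lop_mulVec (k : Fin 3) (M : Matrix (Fin 4) (Fin 4) ℂ) (hφ : DifferentiableAt ℝ φ x) :
    Lop k (fun y => M *ᵥ φ y) x = M *ᵥ Lop k φ x := by
  simp only [Lop_eq_fderiv, fderiv_mulVec M hφ, mulVec_smul]

theorem Lop_spinDot (j : Fin 3) {w : Fin 3 → E3 → Fin 4 → ℂ}
    (hw : ∀ k, DifferentiableAt ℝ (w k) x) :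
    Lop j (fun y => spinDot fun k => w k y) x = spinDot fun k => Lop j (w k) x := by
  simp only [Lop_eq_fderiv, fderiv_spinDot hw, ← map_smul]
  rfl

theorem Lop_radial_smul (k : Fin 3) {f : ℝ → ℝ} (hf : DifferentiableAt ℝ (fun y : E3 => f ‖y‖) x)
    (hφ : DifferentiableAt ℝ φ x) :
    Lop k (fun y => (f ‖y‖ : ℂ) • φ y) x = (f ‖x‖ : ℂ) • Lop k φ x := by
  have tangential := fderiv_radial_apply_eq_zero (f := f) (inner_rotationGen k x)
  simp only [Lop_eq_fderiv, Complex.coe_smul, fderiv_fun_smul hf hφ,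
    _root_.add_apply, _root_.smul_apply, ContinuousLinearMap.smulRight_apply, tangential,
    zero_smul, add_zero]
  exact smul_comm _ _ _

theorem differentiableAt_pd (j : Fin 3) (hφ : ContDiffAt ℝ 2 φ x) :
    DifferentiableAt ℝ (pd j φ) x :=
  (differentiableAt_fderiv hφ).clm_apply (differentiableAt_const _)

theorem differentiableAt_fderiv_rotationGen (k : Fin 3) (hφ : ContDiffAt ℝ 2 φ x) :
    DifferentiableAt ℝ (fun y => fderiv ℝ φ y (rotationGen k y)) x :=
  (differentiableAt_fderiv hφ).clm_apply (rotationGen k).differentiableAt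

theorem differentiableAt_Lop (k : Fin 3) (hφ : ContDiffAt ℝ 2 φ x) :
    DifferentiableAt ℝ (Lop k φ) x := by
  rw [Lop_eq_fderiv]
  exact (differentiableAt_fderiv_rotationGen k hφ).fun_const_smul _

theorem pd_comm (j k : Fin 3) (hφ : ContDiffAt ℝ 2 φ x) :
    pd j (pd k φ) x = pd k (pd j φ) x := by
  have commutator := VectorField.fderiv_apply_lieBracket hφ (by simp)
    (differentiableAt_const (EuclideanSpace.single k (1 : ℝ)))
    (differentiableAt_const (EuclideanSpace.single j (1 : ℝ)))
  simp only [VectorField.lieBracket_eq, fderiv_fun_const, Pi.zero_apply,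
    _root_.zero_apply, sub_zero, map_zero] at commutator
  exact sub_eq_zero.mp commutator.symm

theorem pd_Lop (j k : Fin 3) (hφ : ContDiffAt ℝ 2 φ x) :
    pd j (Lop k φ) x = Lop k (pd j φ) x -
      Complex.I • fderiv ℝ φ x (rotationGen k (EuclideanSpace.single j 1)) := by
  have commutator : fderiv ℝ φ x (rotationGen k (EuclideanSpace.single j 1)) =
      pd j (fun y => fderiv ℝ φ y (rotationGen k y)) x -
        fderiv ℝ (pd j φ) x (rotationGen k x) := by
    have h := VectorField.fderiv_apply_lieBracket hφ (by simp)
      (rotationGen k).differentiableAt (differentiableAt_const (EuclideanSpace.single j (1 : ℝ)))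
    simp only [VectorField.lieBracket_eq, ContinuousLinearMap.fderiv, fderiv_fun_const,
      Pi.zero_apply, _root_.zero_apply, sub_zero] at h
    exact h
  simp only [Lop_eq_fderiv, commutator, pd_apply,
    fderiv_fun_const_smul (differentiableAt_fderiv_rotationGen k hφ), _root_.smul_apply]
  module

theorem sum_Lop_pd (hφ : ContDiffAt ℝ 2 φ x) : ∑ j, Lop j (pd j φ) x = 0 := by
  simp only [Lop, Fin.sum_univ_three, Fin.isValue, zero_add, Fin.reduceAdd, pd_comm 1 0 hφ,
    pd_comm 2 0 hφ, pd_comm 2 1 hφ]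
  module

theorem sum_pd_Lop (hφ : ContDiffAt ℝ 2 φ x) : ∑ j, pd j (Lop j φ) x = 0 := by
  simp only [pd_Lop _ _ hφ, rotationGen_single_self, map_zero, smul_zero, sub_zero, sum_Lop_pd hφ]

theorem Lop_cross_pd_add_pd_cross_Lop (j : Fin 3) (hφ : ContDiffAt ℝ 2 φ x) :
    (Lop (j + 1) (pd (j + 2) φ) x - Lop (j + 2) (pd (j + 1) φ) x) +
      (pd (j + 1) (Lop (j + 2) φ) x - pd (j + 2) (Lop (j + 1) φ) x) =
      (2 * Complex.I) • pd j φ x := by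
  simp only [pd_Lop _ _ hφ, rotationGen_add_one_single_add_two,
    rotationGen_add_two_single_add_one, map_neg, ← pd_apply]
  module

end AngularMomentum

section Dirac

variable {φ χ : E3 → Fin 4 → ℂ} {x : E3}

/-- The operator `(Σ·∇)φ = Σⱼ Σⱼ∂ⱼφ`. -/
def sigmaGrad (φ : E3 → Fin 4 → ℂ) : E3 → Fin 4 → ℂ :=
  fun x => spinDot fun j => pd j φ x

theorem differentiableAt_sigmaGrad (hφ : ContDiffAt ℝ 2 φ x) :
    DifferentiableAt ℝ (sigmaGrad φ) x :=
  differentiableAt_spinDot fun j => differentiableAt_pd j hφ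

theorem sigmaGrad_add (hφ : DifferentiableAt ℝ φ x) (hχ : DifferentiableAt ℝ χ x) :
    sigmaGrad (φ + χ) x = sigmaGrad φ x + sigmaGrad χ x := by
  simp only [sigmaGrad, pd, fderiv_add hφ hχ]
  exact map_add spinDot _ _

theorem sigmaGrad_mulVec {M : Matrix (Fin 4) (Fin 4) ℂ} (hM : ∀ j, Commute (SigM j) M)
    (hφ : DifferentiableAt ℝ φ x) : sigmaGrad (fun y => M *ᵥ φ y) x = M *ᵥ sigmaGrad φ x := by
  simp only [sigmaGrad, pd, fderiv_mulVec M hφ, spinDot_mulVec hM]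

theorem SigL_eq_spinDot (φ : E3 → Fin 4 → ℂ) :
    SigL φ = fun x => spinDot fun j => Lop j φ x := by
  ext1 x
  rw [SigL, spinDot_apply]

theorem differentiableAt_SigL (hφ : ContDiffAt ℝ 2 φ x) : DifferentiableAt ℝ (SigL φ) x := by
  rw [SigL_eq_spinDot]
  exact differentiableAt_spinDot fun k => differentiableAt_Lop k hφ

theorem SigL_sigmaGrad_add_sigmaGrad_SigL (hφ : ContDiffAt ℝ 2 φ x) :
    SigL (sigmaGrad φ) x + sigmaGrad (SigL φ) x = (-2 : ℂ) • sigmaGrad φ x := by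
  have SigL_grad : SigL (sigmaGrad φ) x = spinDot fun j => spinDot fun k => Lop j (pd k φ) x := by
    rw [SigL_eq_spinDot]
    exact congrArg spinDot (funext fun j => Lop_spinDot j fun k => differentiableAt_pd k hφ)
  have grad_SigL : sigmaGrad (SigL φ) x = spinDot fun j => spinDot fun k => pd j (Lop k φ) x := by
    simp only [SigL_eq_spinDot, sigmaGrad, pd,
      fderiv_spinDot fun k => differentiableAt_Lop k hφ]
  rw [SigL_grad, grad_SigL, spinDot_spinDot, spinDot_spinDot, sum_Lop_pd hφ, sum_pd_Lop hφ,
    zero_add, zero_add, ← smul_add, ← map_add]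
  calc Complex.I • spinDot _
      = Complex.I • spinDot ((2 * Complex.I) • fun j => pd j φ x) :=
        congrArg (fun w => Complex.I • spinDot w)
          (funext fun j => Lop_cross_pd_add_pd_cross_Lop j hφ)
    _ = (-2 : ℂ) • sigmaGrad φ x := by
        rw [map_smul, smul_smul, mul_left_comm, Complex.I_mul_I, mul_neg_one, sigmaGrad]

theorem Kop_add (hφ : DifferentiableAt ℝ φ x) (hχ : DifferentiableAt ℝ χ x) :
    Kop (φ + χ) x = Kop φ x + Kop χ x := by
  have hSigL : SigL (φ + χ) x = SigL φ x + SigL χ x := by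
    simp only [SigL, Lop_add _ hφ hχ, mulVec_add, Finset.sum_add_distrib]
  simp only [Kop, hSigL, Pi.add_apply, mulVec_add]
  abel

theorem Kop_mulVec {M N : Matrix (Fin 4) (Fin 4) ℂ} (hβ : betaM * M = N * betaM)
    (hM : ∀ j, Commute (SigM j) M) (hφ : DifferentiableAt ℝ φ x) :
    Kop (fun y => M *ᵥ φ y) x = N *ᵥ Kop φ x := by
  simp only [Kop, SigL_eq_spinDot, Lop_mulVec _ M hφ, spinDot_mulVec hM, ← mulVec_add,
    mulVec_mulVec, hβ]

theorem Kop_radial_smul {f : ℝ → ℝ} (hf : DifferentiableAt ℝ (fun y : E3 => f ‖y‖) x)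
    (hφ : DifferentiableAt ℝ φ x) :
    Kop (fun y => (f ‖y‖ : ℂ) • φ y) x = (f ‖x‖ : ℂ) • Kop φ x := by
  simp only [Kop, SigL, Lop_radial_smul _ hf hφ, mulVec_smul, ← Finset.smul_sum, ← smul_add]

theorem Kop_sigmaGrad (hφ : ContDiffAt ℝ 2 φ x) :
    Kop (sigmaGrad φ) x = -sigmaGrad (Kop φ) x := by
  have hφ₁ : DifferentiableAt ℝ φ x := hφ.differentiableAt two_ne_zero
  have hSigL := differentiableAt_SigL hφ
  have anticomm := eq_sub_of_add_eq (SigL_sigmaGrad_add_sigmaGrad_SigL hφ)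
  calc Kop (sigmaGrad φ) x
      = betaM *ᵥ (sigmaGrad φ x + ((-2 : ℂ) • sigmaGrad φ x - sigmaGrad (SigL φ) x)) := by
        rw [Kop, anticomm]
    _ = -(betaM *ᵥ (sigmaGrad φ x + sigmaGrad (SigL φ) x)) := by
        rw [← mulVec_neg]
        congr 1
        module
    _ = -(betaM *ᵥ sigmaGrad (φ + SigL φ) x) := by rw [sigmaGrad_add hφ₁ hSigL]
    _ = -sigmaGrad (Kop φ) x := by
        rw [← sigmaGrad_mulVec SigM_commute_betaM (hφ₁.add hSigL)]
        rfl

theorem Bop_eq (f : ℝ → ℝ) (m : ℝ) (φ : E3 → Fin 4 → ℂ) :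
    Bop f m φ = (fun x => (-Complex.I • gamma5) *ᵥ sigmaGrad φ x) +
      (fun x => (f ‖x‖ : ℂ) • φ x) + fun x => ((m : ℂ) • betaM) *ᵥ φ x := by
  ext1 x
  simp only [Bop, sigmaGrad, spinDot_apply, Pi.add_apply, mulVec_sum, mulVec_mulVec,
    smul_mul_assoc, gamma5_mul_SigM, smul_mulVec, mulVec_smul]

end Dirac

theorem Bop_comm_Kop_general {f : ℝ → ℝ} (m : ℝ) {ψ : E3 → Fin 4 → ℂ} {x : E3}
    (hf : DifferentiableAt ℝ (fun y : E3 => f ‖y‖) x) (hψ : ContDiffAt ℝ 2 ψ x) :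
    Bop f m (Kop ψ) x = Kop (Bop f m ψ) x := by
  have hψ₁ : DifferentiableAt ℝ ψ x := hψ.differentiableAt two_ne_zero
  have hgrad := differentiableAt_sigmaGrad hψ
  have hkin := differentiableAt_mulVec (-Complex.I • gamma5) hgrad
  have hpot : DifferentiableAt ℝ (fun y => (f ‖y‖ : ℂ) • ψ y) x := by
    simpa only [Complex.coe_smul] using hf.fun_smul hψ₁
  have hmass := differentiableAt_mulVec ((m : ℂ) • betaM) hψ₁
  have Kop_kin : Kop (fun y => (-Complex.I • gamma5) *ᵥ sigmaGrad ψ y) x =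
      (-Complex.I • gamma5) *ᵥ sigmaGrad (Kop ψ) x := by
    rw [Kop_mulVec (N := Complex.I • gamma5) (by simp [betaM_mul_gamma5])
      (fun j => (SigM_commute_gamma5 j).smul_right _) hgrad, Kop_sigmaGrad hψ]
    simp only [mulVec_neg, neg_smul, neg_mulVec]
  have Kop_mass : Kop (fun y => ((m : ℂ) • betaM) *ᵥ ψ y) x = ((m : ℂ) • betaM) *ᵥ Kop ψ x :=
    Kop_mulVec (by simp) (fun j => (SigM_commute_betaM j).smul_right _) hψ₁
  rw [Bop_eq, Bop_eq, Kop_add (hkin.add hpot) hmass, Kop_add hkin hpot, Kop_kin,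
    Kop_radial_smul hf hψ₁, Kop_mass]
  rfl

/-- For a radial potential `A₀(x) = f(|x|)` (`f` smooth on `(0,∞)`), the Dirac
Hamiltonian `ℬ` commutes with Dirac's operator `K` on smooth functions on `ℝ³∖{0}`. -/
theorem Bop_comm_Kop (f : ℝ → ℝ) (hf : ContDiffOn ℝ (⊤ : ℕ∞) f (Set.Ioi 0)) (m : ℝ)
    (ψ : E3 → Fin 4 → ℂ) (hψ : ContDiffOn ℝ (⊤ : ℕ∞) ψ {x : E3 | x ≠ 0})
    (x : E3) (hx : x ≠ 0) :
    Bop f m (Kop ψ) x = Kop (Bop f m ψ) x := by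
  have hfx : DifferentiableAt ℝ f ‖x‖ :=
    (hf.contDiffAt (Ioi_mem_nhds (norm_pos_iff.mpr hx))).differentiableAt (by simp)
  exact Bop_comm_Kop_general m (hfx.comp x (differentiableAt_id.norm ℝ hx))
    (contDiffAt_infty.mp (hψ.contDiffAt (isOpen_ne.mem_nhds hx)) 2)

end
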